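/- Character expansion of the partition function: let N be a positive integer, A_N and B_N positive semidefinite N×N Hermitian matrices with operator norm at most 1, and Φ : ℝ → ℝ a continuous function with 0 ≤ Φ(x) for all x and sup_x Φ(x) < 1. Let dM denote an additive Haar (Lebesgue) measure on the real vector space of N×N Hermitian matrices, and let X be any Borel set of probability measures on ℝ. Then ∫_{{M : μ̂^N_M ∈ X}} exp(−(N/2)·tr(M²)) · det(I_{N²} − B_N ⊗ (Φ(M)A_N))^{−1} dM = Σ_λ s_λ(B_N) · ∫_{{M : μ̂^N_M ∈ X}} exp(−(N/2)·tr(M²)) · s_λ(Φ(M)A_N) dM, where the sum runs over all Young diagrams λ with at most N rows and both sides are finite. -/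

import Mathlib

/-- A semistandard Young tableau of shape `lam` (a Young diagram with at most `N` rows,
given as a nonincreasing function `Fin N → ℕ`), with entries in `Fin N` (representing
the integers `1, …, N`).  `entry i j` is the entry in row `i` and column `j` (0-indexed);
rows are weakly increasing, columns are strictly increasing, and entries outside of the
shape are normalized to `0`. -/
structure SSYT (N : ℕ) (lam : Fin N → ℕ) where
  entry : Fin N → ℕ → Fin N
  rowWeak : ∀ (i : Fin N) (j1 j2 : ℕ), j1 ≤ j2 → j2 < lam i → entry i j1 ≤ entry i j2
  colStrict : ∀ (i1 i2 : Fin N), i1 < i2 → ∀ j : ℕ, j < lam i2 → entry i1 j < entry i2 j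
  zeroOutside : ∀ (i : Fin N) (j : ℕ), lam i ≤ j → (entry i j : ℕ) = 0

/-- The content of a semistandard Young tableau: `content T k` is the number of cells of
`T` whose entry equals `k`. -/
noncomputable def SSYT.content {N : ℕ} {lam : Fin N → ℕ} (T : SSYT N lam) (k : Fin N) : ℕ :=
  ∑ i : Fin N, ((Finset.range (lam i)).filter (fun j => T.entry i j = k)).card

/-- The Schur polynomial `s_lam (x 0, …, x (N-1))`, defined as the sum over all semistandard
Young tableaux `T` of shape `lam` with entries in `{1, …, N}` of the monomial
`∏ k, (x k) ^ (number of entries of T equal to k)`. -/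
noncomputable def schur {R : Type*} [CommRing R] [TopologicalSpace R] (N : ℕ)
    (lam : Fin N → ℕ) (x : Fin N → R) : R :=
  ∑' T : SSYT N lam, ∏ k : Fin N, x k ^ T.content k


/-- Matrices are endowed with the Borel sigma-algebra of their (entrywise) topology. -/
noncomputable instance matrixMeasurableSpace {m n α : Type*} [TopologicalSpace α] :
    MeasurableSpace (Matrix m n α) := borel _

open MeasureTheory ComplexOrder

/-- A self-adjoint complex matrix is Hermitian. -/
theorem selfAdjoint_matrix_isHermitian {N : ℕ}
    (M : selfAdjoint (Matrix (Fin N) (Fin N) ℂ)) :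
    (M : Matrix (Fin N) (Fin N) ℂ).IsHermitian := M.2

/-- The spectral (empirical eigenvalue) measure `μ̂^N_M = (1/N) ∑ δ_{x_i}` of a Hermitian
matrix `M` with eigenvalues `x_1, …, x_N`. -/
noncomputable def specMeasure {N : ℕ} (M : selfAdjoint (Matrix (Fin N) (Fin N) ℂ)) :
    Measure ℝ :=
  (N : ENNReal)⁻¹ • ∑ i : Fin N,
    Measure.dirac ((selfAdjoint_matrix_isHermitian M).eigenvalues i)

/-- Continuous functional calculus for a Hermitian matrix:
`Φ(M) = U diag (Φ(x_1), …, Φ(x_N)) U⋆` for `M = U diag (x_1, …, x_N) U⋆`. -/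
noncomputable def applyFun {N : ℕ} (Φ : ℝ → ℝ)
    (M : selfAdjoint (Matrix (Fin N) (Fin N) ℂ)) : Matrix (Fin N) (Fin N) ℂ :=
  ((selfAdjoint_matrix_isHermitian M).eigenvectorUnitary : Matrix (Fin N) (Fin N) ℂ) *
    Matrix.diagonal
      (fun i => ((Φ ((selfAdjoint_matrix_isHermitian M).eigenvalues i) : ℝ) : ℂ)) *
    star ((selfAdjoint_matrix_isHermitian M).eigenvectorUnitary : Matrix (Fin N) (Fin N) ℂ)

/-- The Schur polynomial of an `N × N` complex matrix: `s_λ(C)` is `s_λ` evaluated at the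
`N` eigenvalues of `C` (the roots, with multiplicity, of its characteristic polynomial). -/
noncomputable def schurMat (N : ℕ) (lam : Fin N → ℕ) (C : Matrix (Fin N) (Fin N) ℂ) : ℂ :=
  schur N lam (fun i => C.charpoly.roots.toList.getD (i : ℕ) 0)

/-!
Both sides come from one pointwise identity. The eigenvalues of `C = Φ(M) A` lie in `[0, r]` for
some `r < 1`, because `Φ(M) A` has the same nonzero spectrum as a product `√A Φ(M) √A`. Cauchy's
identity `∑ s_λ(b) s_λ(y) = ∏ (1 - b_i y_j)⁻¹`, applied to the eigenvalues `b` of `B` and `y` of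
`C`, then expands `det (1 - B ⊗ C)⁻¹`. All terms are nonnegative and the sum is bounded uniformly in
`M`, so it may be integrated term by term against the Gaussian weight. The integrands are measurable
because `s_λ(C)`, being symmetric in the roots of the characteristic polynomial, is a polynomial in
its coefficients.

Cauchy's identity and the symmetry of `s_λ` both follow from the branching rule, which builds a
tableau by adding one horizontal strip per variable. Reflecting an interval of shapes shows that two
successive strips can be exchanged, and that adding a strip of weight `x` and removing one of weight
`y` commute up to the factor `(1 - x y)⁻¹`; iterating the latter gives the product.
-/

open scoped NNReal ENNReal

section Finset

variable {α : Type*} [AddCommMonoid α] [PartialOrder α] [CanonicallyOrderedAdd α]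
  [IsOrderedCancelAddMonoid α] [Sub α] [OrderedSub α] [LocallyFiniteOrder α]

theorem sum_Icc_reflect {β : Type*} [AddCommMonoid β] (f : α → β) (a b : α) :
    ∑ t ∈ Finset.Icc a b, f (a + b - t) = ∑ t ∈ Finset.Icc a b, f t := by
  have hmem : ∀ t ∈ Finset.Icc a b, a + b - t ∈ Finset.Icc a b := fun t ht => by
    rw [Finset.mem_Icc] at ht ⊢
    refine ⟨?_, tsub_le_iff_right.2 (by rw [add_comm]; gcongr; exact ht.1)⟩
    rw [add_tsub_assoc_of_le ht.2]
    exact le_self_add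
  have hinv : ∀ t ∈ Finset.Icc a b, a + b - (a + b - t) = t := fun t ht =>
    tsub_tsub_cancel_of_le ((Finset.mem_Icc.1 ht).2.trans le_add_self)
  exact Finset.sum_nbij' (a + b - ·) (a + b - ·) hmem hmem hinv hinv fun _ _ => rfl

end Finset

section Shape

/-- The shape obtained by deleting the first row. Shapes are encoded as sequences of row lengths
`ℕ →₀ ℕ`; a skew shape `l / m` of partitions is a horizontal strip exactly when
`m ∈ Finset.Icc (dropRow l) l`, that is, `l (i + 1) ≤ m i ≤ l i`. -/
noncomputable def dropRow (l : ℕ →₀ ℕ) : ℕ →₀ ℕ :=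
  l.comapDomain (· + 1) (add_left_injective 1).injOn

/-- The shape obtained by putting a row of length `c` in front of the rows of `l`; it is the
inverse operation to `dropRow`. -/
noncomputable def consRow (c : ℕ) (l : ℕ →₀ ℕ) : ℕ →₀ ℕ :=
  Finsupp.single 0 c + l.mapDomain (· + 1)

@[simp]
theorem dropRow_apply (l : ℕ →₀ ℕ) (i : ℕ) : dropRow l i = l (i + 1) :=
  Finsupp.comapDomain_apply ..

@[simp]
theorem consRow_zero (c : ℕ) (l : ℕ →₀ ℕ) : consRow c l 0 = c := by
  simp [consRow, Finsupp.mapDomain_of_notMem_range]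

@[simp]
theorem consRow_succ (c : ℕ) (l : ℕ →₀ ℕ) (i : ℕ) : consRow c l (i + 1) = l i := by
  simp [consRow, Finsupp.mapDomain_apply (add_left_injective 1)]

@[simp]
theorem dropRow_consRow (c : ℕ) (l : ℕ →₀ ℕ) : dropRow (consRow c l) = l := by
  ext; simp

@[simp]
theorem consRow_apply_zero_dropRow (l : ℕ →₀ ℕ) : consRow (l 0) (dropRow l) = l := by
  ext (_ | _) <;> simp

@[simp]
theorem dropRow_zero : dropRow 0 = 0 := by
  ext; simp

theorem dropRow_sup (l m : ℕ →₀ ℕ) : dropRow (l ⊔ m) = dropRow l ⊔ dropRow m := by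
  ext; simp

theorem le_consRow_iff {c : ℕ} {l m : ℕ →₀ ℕ} : m ≤ consRow c l ↔ m 0 ≤ c ∧ dropRow m ≤ l := by
  simp [Finsupp.le_def, ← Nat.and_forall_add_one (p := fun i => m i ≤ consRow c l i)]

theorem le_iff_apply_zero_le_and_dropRow_le {l m : ℕ →₀ ℕ} :
    m ≤ l ↔ m 0 ≤ l 0 ∧ dropRow m ≤ dropRow l := by
  rw [← le_consRow_iff, consRow_apply_zero_dropRow]

@[simp]
theorem degree_consRow (c : ℕ) (l : ℕ →₀ ℕ) : (consRow c l).degree = c + l.degree := by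
  simp [consRow, Finsupp.degree_mapDomain]

theorem apply_zero_add_degree_dropRow (l : ℕ →₀ ℕ) : l 0 + (dropRow l).degree = l.degree := by
  rw [← degree_consRow, consRow_apply_zero_dropRow]

theorem degree_sup_add_degree_inf (l m : ℕ →₀ ℕ) :
    (l ⊔ m).degree + (l ⊓ m).degree = l.degree + m.degree := by
  rw [← map_add, ← map_add]
  congr 1
  ext i
  simp [max_add_min]

theorem antitone_of_dropRow_le {l m : ℕ →₀ ℕ} (h₁ : dropRow l ≤ m) (h₂ : m ≤ l) :
    Antitone l :=
  antitone_nat_of_succ_le fun i => by simpa using (h₁.trans h₂) i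

theorem antitone_right_of_dropRow_le {l m : ℕ →₀ ℕ} (h₁ : dropRow l ≤ m) (h₂ : m ≤ l) :
    Antitone m :=
  antitone_nat_of_succ_le fun i => (h₂ (i + 1)).trans (by simpa using h₁ i)

theorem degree_tsub_of_le {l m : ℕ →₀ ℕ} (h : m ≤ l) :
    (l - m).degree = l.degree - m.degree := by
  rw [eq_tsub_iff_add_eq_of_le (Finsupp.degree_mono h), ← map_add, tsub_add_cancel_of_le h]

end Shape

section BranchingSchur

variable {R S : Type*} [CommSemiring R] [CommSemiring S]

/-- The Schur polynomial of shape `l` in the variables `x 0, …, x (n - 1)`, defined by the branching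
rule: the cells filled with the largest variable form a horizontal strip. It vanishes unless `l` is
a partition with at most `n` rows. -/
noncomputable def branchingSchur (x : ℕ → R) : ℕ → (ℕ →₀ ℕ) → R
  | 0, l => if l = 0 then 1 else 0
  | n + 1, l => ∑ m ∈ Finset.Icc (dropRow l) l,
      x n ^ (l.degree - m.degree) * branchingSchur x n m

@[simp]
theorem branchingSchur_zero (x : ℕ → R) (l : ℕ →₀ ℕ) :
    branchingSchur x 0 l = if l = 0 then 1 else 0 :=
  rfl

theorem branchingSchur_succ (x : ℕ → R) (n : ℕ) (l : ℕ →₀ ℕ) :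
    branchingSchur x (n + 1) l = ∑ m ∈ Finset.Icc (dropRow l) l,
      x n ^ (l.degree - m.degree) * branchingSchur x n m :=
  rfl

@[simp]
theorem branchingSchur_shape_zero (x : ℕ → R) (n : ℕ) : branchingSchur x n 0 = 1 := by
  induction n with
  | zero => simp
  | succ n ih => simp [branchingSchur_succ, ih]

theorem branchingSchur_congr {x y : ℕ → R} {n : ℕ} (h : ∀ i < n, x i = y i) (l : ℕ →₀ ℕ) :
    branchingSchur x n l = branchingSchur y n l := by
  induction n generalizing l with
  | zero => rfl
  | succ n ih => simp_rw [branchingSchur_succ, h n n.lt_succ_self, ih fun i hi => h i (by omega)]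

theorem map_branchingSchur (f : R →+* S) (x : ℕ → R) (n : ℕ) (l : ℕ →₀ ℕ) :
    f (branchingSchur x n l) = branchingSchur (f ∘ x) n l := by
  induction n generalizing l with
  | zero => simp [apply_ite f]
  | succ n ih => simp [branchingSchur_succ, ih]

theorem map_branchingSchur_extend {N : ℕ} (f : R →+* S) (x : Fin N → R) (n : ℕ) (l : ℕ →₀ ℕ) :
    f (branchingSchur (Function.extend Fin.val x 0) n l) =
      branchingSchur (Function.extend Fin.val (f ∘ x) 0) n l := by
  rw [map_branchingSchur]
  congr 1
  ext1 i
  rw [Function.comp_apply, Function.apply_extend f]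
  congr 1
  ext1
  exact map_zero f

theorem antitone_of_branchingSchur_ne_zero {x : ℕ → R} {n : ℕ} {l : ℕ →₀ ℕ}
    (h : branchingSchur x n l ≠ 0) : Antitone l := by
  cases n with
  | zero =>
    obtain rfl : l = 0 := by by_contra hl; simp [hl] at h
    exact antitone_const
  | succ n =>
    obtain ⟨m, hm, -⟩ := Finset.exists_ne_zero_of_sum_ne_zero h
    rw [Finset.mem_Icc] at hm
    exact antitone_of_dropRow_le hm.1 hm.2

theorem apply_eq_zero_of_branchingSchur_ne_zero {x : ℕ → R} {n : ℕ} {l : ℕ →₀ ℕ}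
    (h : branchingSchur x n l ≠ 0) {i : ℕ} (hi : n ≤ i) : l i = 0 := by
  induction n generalizing l i with
  | zero =>
    obtain rfl : l = 0 := by by_contra hl; simp [hl] at h
    rfl
  | succ n ih =>
    obtain ⟨m, hm, hm0⟩ := Finset.exists_ne_zero_of_sum_ne_zero h
    obtain ⟨i, rfl⟩ := Nat.exists_eq_add_of_le' (Nat.one_le_of_lt hi)
    refine Nat.eq_zero_of_le_zero (((Finset.mem_Icc.1 hm).1 i).trans_eq ?_)
    exact ih (right_ne_zero_of_mul hm0) (by omega)

/-- For fixed `l` and `k`, the shapes that split `l / k` into two strips form an interval. -/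
theorem sum_Icc_dropRow_comm {M : Type*} [AddCommMonoid M] (l : ℕ →₀ ℕ)
    (f : (ℕ →₀ ℕ) → (ℕ →₀ ℕ) → M) :
    ∑ m ∈ Finset.Icc (dropRow l) l, ∑ k ∈ Finset.Icc (dropRow m) m, f m k =
      ∑ k ∈ Finset.Iic l,
        ∑ m ∈ Finset.Icc (dropRow l ⊔ k) (consRow (l 0) (dropRow l ⊓ k)), f m k := by
  refine Finset.sum_comm' fun m k => ?_
  simp only [Finset.mem_Icc, Finset.mem_Iic, sup_le_iff, le_consRow_iff, le_inf_iff,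
    le_iff_apply_zero_le_and_dropRow_le (l := l) (m := m)]
  refine ⟨?_, fun ⟨⟨⟨h₁, h₂⟩, h₃, h₄, h₅⟩, _⟩ => ⟨⟨h₁, h₃, h₄⟩, h₅, h₂⟩⟩
  rintro ⟨⟨h₁, h₃, h₄⟩, h₅, h₂⟩
  exact ⟨⟨⟨h₁, h₂⟩, h₃, h₄, h₅⟩, h₂.trans (le_iff_apply_zero_le_and_dropRow_le.2 ⟨h₃, h₄⟩)⟩

/-- The Bender–Knuth involution, written on shapes: `m ↦ a + b - m` on the interval `[a, b]` of
intermediate shapes exchanges the sizes of the two strips. -/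
theorem sum_pow_mul_pow_swap (x y : R) (l k : ℕ →₀ ℕ) :
    ∑ m ∈ Finset.Icc (dropRow l ⊔ k) (consRow (l 0) (dropRow l ⊓ k)),
        x ^ (l.degree - m.degree) * y ^ (m.degree - k.degree) =
      ∑ m ∈ Finset.Icc (dropRow l ⊔ k) (consRow (l 0) (dropRow l ⊓ k)),
        y ^ (l.degree - m.degree) * x ^ (m.degree - k.degree) := by
  set a := dropRow l ⊔ k with ha
  set b := consRow (l 0) (dropRow l ⊓ k) with hb
  have hab : a.degree + b.degree = l.degree + k.degree := by
    have := degree_sup_add_degree_inf (dropRow l) k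
    have := apply_zero_add_degree_dropRow l
    rw [ha, hb, degree_consRow]
    omega
  rw [← sum_Icc_reflect]
  refine Finset.sum_congr rfl fun m hm => ?_
  rw [Finset.mem_Icc] at hm
  have hmb := Finsupp.degree_mono hm.2
  have hkm := Finsupp.degree_mono (le_sup_right.trans hm.1)
  have hml : m.degree ≤ l.degree :=
    Finsupp.degree_mono <| le_iff_apply_zero_le_and_dropRow_le.2 <|
      (le_consRow_iff.1 hm.2).imp_right (le_inf_iff.1 · |>.1)
  rw [degree_tsub_of_le (hm.2.trans le_add_self), map_add, hab, mul_comm]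
  congr 2 <;> omega

theorem branchingSchur_succ_succ (x : ℕ → R) (n : ℕ) (l : ℕ →₀ ℕ) :
    branchingSchur x (n + 2) l = ∑ k ∈ Finset.Iic l,
      (∑ m ∈ Finset.Icc (dropRow l ⊔ k) (consRow (l 0) (dropRow l ⊓ k)),
        x (n + 1) ^ (l.degree - m.degree) * x n ^ (m.degree - k.degree)) *
          branchingSchur x n k := by
  simp_rw [branchingSchur_succ, Finset.mul_sum, sum_Icc_dropRow_comm, Finset.sum_mul, mul_assoc]

theorem branchingSchur_comp_swap_succ (x : ℕ → R) {i n : ℕ} (hi : i + 2 ≤ n) (l : ℕ →₀ ℕ) :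
    branchingSchur (x ∘ Equiv.swap i (i + 1)) n l = branchingSchur x n l := by
  induction n, hi using Nat.le_induction generalizing l with
  | base =>
    have hlow (k : ℕ →₀ ℕ) :
        branchingSchur (x ∘ Equiv.swap i (i + 1)) i k = branchingSchur x i k :=
      branchingSchur_congr (fun j hj => by
        simp [Equiv.swap_apply_of_ne_of_ne hj.ne (by omega : j ≠ i + 1)]) k
    simp_rw [branchingSchur_succ_succ, hlow, Function.comp_apply, Equiv.swap_apply_left,
      Equiv.swap_apply_right, sum_pow_mul_pow_swap (x i) (x (i + 1))]
  | succ n hn ih =>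
    simp_rw [branchingSchur_succ, ih, Function.comp_apply,
      Equiv.swap_apply_of_ne_of_ne (by omega : n ≠ i) (by omega : n ≠ i + 1)]

end BranchingSchur

section Symmetry

variable {R : Type*} [CommSemiring R]

theorem branchingSchur_extend_comp_perm {N : ℕ} (x : Fin N → R) (σ : Equiv.Perm (Fin N))
    (l : ℕ →₀ ℕ) :
    branchingSchur (Function.extend Fin.val (x ∘ σ) 0) N l =
      branchingSchur (Function.extend Fin.val x 0) N l := by
  obtain _ | n := N
  · rfl
  have hσ : σ ∈ Submonoid.closure (Set.range fun i : Fin n => Equiv.swap i.castSucc i.succ) :=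
    Equiv.Perm.mclosure_swap_castSucc_succ n ▸ Submonoid.mem_top σ
  induction hσ using Submonoid.closure_induction generalizing x with
  | mem σ h =>
    obtain ⟨i, rfl⟩ := h
    rw [← branchingSchur_comp_swap_succ (Function.extend Fin.val x 0) (by omega : i.1 + 2 ≤ n + 1)]
    refine branchingSchur_congr (fun j hj => ?_) l
    lift j to Fin (n + 1) using hj
    have hswap : Equiv.swap i.1 (i.1 + 1) j = (Equiv.swap i.castSucc i.succ j : Fin (n + 1)) :=
      Fin.val_injective.swap_apply i.castSucc i.succ j
    simp only [Function.comp_apply, hswap, Fin.val_injective.extend_apply]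
  | one => rfl
  | mul σ τ _ _ hσ hτ => rw [Equiv.Perm.coe_mul, ← Function.comp_assoc, hτ, hσ]

end Symmetry

section Cauchy

/-- The transition weight of the branching rule: `x ^ |l / m|` if `l / m` is a horizontal strip,
and `0` otherwise. -/
noncomputable def stripWeight (x : ℝ≥0∞) (l m : ℕ →₀ ℕ) : ℝ≥0∞ :=
  if dropRow l ≤ m ∧ m ≤ l then x ^ (l.degree - m.degree) else 0

theorem tsum_stripWeight_mul (x : ℝ≥0∞) (l : ℕ →₀ ℕ) (f : (ℕ →₀ ℕ) → ℝ≥0∞) :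
    ∑' m, stripWeight x l m * f m =
      ∑ m ∈ Finset.Icc (dropRow l) l, x ^ (l.degree - m.degree) * f m := by
  rw [tsum_eq_sum (s := Finset.Icc (dropRow l) l) fun m hm => by
    rw [stripWeight, if_neg (Finset.mem_Icc.not.1 hm), zero_mul]]
  exact Finset.sum_congr rfl fun m hm => by rw [stripWeight, if_pos (Finset.mem_Icc.1 hm)]

theorem tsum_stripWeight_mul_branchingSchur (x : ℕ → ℝ≥0∞) (n : ℕ) (l : ℕ →₀ ℕ) :
    ∑' m, stripWeight (x n) l m * branchingSchur x n m = branchingSchur x (n + 1) l :=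
  tsum_stripWeight_mul ..

theorem tsum_stripWeight_mul_stripWeight_right (x y : ℝ≥0∞) (l m : ℕ →₀ ℕ) :
    ∑' k, stripWeight x l k * stripWeight y m k =
      ∑ k ∈ Finset.Icc (dropRow (l ⊔ m)) (l ⊓ m),
        x ^ (l.degree - k.degree) * y ^ (m.degree - k.degree) := by
  have key (k : ℕ →₀ ℕ) : stripWeight x l k * stripWeight y m k =
      if k ∈ Finset.Icc (dropRow (l ⊔ m)) (l ⊓ m) then
        x ^ (l.degree - k.degree) * y ^ (m.degree - k.degree) else 0 := by
    simp only [stripWeight, ite_zero_mul_ite_zero, Finset.mem_Icc, dropRow_sup, sup_le_iff,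
      le_inf_iff, and_and_and_comm]
  rw [tsum_congr key, tsum_eq_sum (s := Finset.Icc _ _) fun k hk => if_neg hk]
  exact Finset.sum_congr rfl fun k hk => if_pos hk

theorem stripWeight_consRow_mul_stripWeight_consRow (x y : ℝ≥0∞) (l m t : ℕ →₀ ℕ) (c : ℕ) :
    stripWeight x (consRow ((l ⊔ m) 0 + c) t) l * stripWeight y (consRow ((l ⊔ m) 0 + c) t) m =
      if t ∈ Finset.Icc (dropRow (l ⊔ m)) (l ⊓ m) then
        x ^ ((l ⊔ m) 0 + c + t.degree - l.degree) * y ^ ((l ⊔ m) 0 + c + t.degree - m.degree)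
      else 0 := by
  have hl : l 0 ≤ (l ⊔ m) 0 + c := le_add_right le_sup_left
  have hm : m 0 ≤ (l ⊔ m) 0 + c := le_add_right le_sup_right
  simp only [stripWeight, ite_zero_mul_ite_zero, Finset.mem_Icc, dropRow_sup, sup_le_iff,
    le_inf_iff, dropRow_consRow, degree_consRow, le_consRow_iff, hl, hm, true_and]
  congr 1
  exact propext ⟨fun h => ⟨⟨h.1.2, h.2.2⟩, h.1.1, h.2.1⟩, fun h => ⟨⟨h.2.1, h.1.1⟩, h.2.2, h.1.2⟩⟩

theorem tsum_stripWeight_mul_stripWeight_left (x y : ℝ≥0∞) (l m : ℕ →₀ ℕ) :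
    ∑' n, stripWeight x n l * stripWeight y n m =
      ∑' c : ℕ, ∑ t ∈ Finset.Icc (dropRow (l ⊔ m)) (l ⊓ m),
        x ^ ((l ⊔ m) 0 + c + t.degree - l.degree) *
          y ^ ((l ⊔ m) 0 + c + t.degree - m.degree) := by
  have hinj : Function.Injective fun p : ℕ × (ℕ →₀ ℕ) => consRow ((l ⊔ m) 0 + p.1) p.2 := by
    rintro ⟨c, t⟩ ⟨c', t'⟩ h
    have h₀ : (l ⊔ m) 0 + c = (l ⊔ m) 0 + c' := by simpa using DFunLike.congr_fun h 0
    have h₁ : t = t' := by simpa using congrArg dropRow h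
    rw [Nat.add_left_cancel h₀, h₁]
  have hsupp : (Function.support fun n => stripWeight x n l * stripWeight y n m) ⊆
      Set.range fun p : ℕ × (ℕ →₀ ℕ) => consRow ((l ⊔ m) 0 + p.1) p.2 := fun n hn => by
    have hl : l ≤ n := by by_contra h; simp [stripWeight, h] at hn
    have hm : m ≤ n := by by_contra h; simp [stripWeight, h] at hn
    refine ⟨(n 0 - (l ⊔ m) 0, dropRow n), ?_⟩
    simp only [Nat.add_sub_of_le (sup_le hl hm 0), consRow_apply_zero_dropRow]
  rw [← hinj.tsum_eq hsupp, ENNReal.tsum_prod']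
  refine tsum_congr fun c => ?_
  simp_rw [stripWeight_consRow_mul_stripWeight_consRow]
  rw [tsum_eq_sum (s := Finset.Icc _ _) fun t ht => if_neg ht]
  exact Finset.sum_congr rfl fun t ht => if_pos ht

/-- The operators adding and removing horizontal strips commute up to the factor `(1 - x y)⁻¹`.
The bijection behind it sends a shape `n` containing `l` and `m` with strips as differences to the
pair of the excess of its first row and the reflection of its remaining rows in
`[dropRow (l ⊔ m), l ⊓ m]`. -/
theorem tsum_stripWeight_mul_stripWeight_comm (x y : ℝ≥0∞) (l m : ℕ →₀ ℕ) :
    ∑' n, stripWeight x n l * stripWeight y n m =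
      (1 - x * y)⁻¹ * ∑' k, stripWeight y l k * stripWeight x m k := by
  rw [tsum_stripWeight_mul_stripWeight_left, tsum_stripWeight_mul_stripWeight_right,
    ← ENNReal.tsum_geometric, ← ENNReal.tsum_mul_right]
  refine tsum_congr fun c => ?_
  rw [← sum_Icc_reflect, Finset.mul_sum]
  refine Finset.sum_congr rfl fun k hk => ?_
  rw [Finset.mem_Icc, le_inf_iff] at hk
  have hkl := Finsupp.degree_mono hk.2.1
  have hkm := Finsupp.degree_mono hk.2.2
  have hdrop := apply_zero_add_degree_dropRow (l ⊔ m)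
  have hsum := degree_sup_add_degree_inf l m
  have hle : k ≤ dropRow (l ⊔ m) + l ⊓ m := le_add_left (le_inf hk.2.1 hk.2.2)
  have hdeg := Finsupp.degree_mono hle
  rw [map_add] at hdeg
  rw [degree_tsub_of_le hle, map_add,
    show (l ⊔ m) 0 + c + ((dropRow (l ⊔ m)).degree + (l ⊓ m).degree - k.degree) - l.degree =
      c + (m.degree - k.degree) by omega,
    show (l ⊔ m) 0 + c + ((dropRow (l ⊔ m)).degree + (l ⊓ m).degree - k.degree) - m.degree =
      c + (l.degree - k.degree) by omega, pow_add, pow_add, mul_pow]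
  ring

theorem tsum_stripWeight_mul_branchingSchur_left (z : ℝ≥0∞) (y : ℕ → ℝ≥0∞) (n : ℕ)
    (m : ℕ →₀ ℕ) :
    ∑' l, stripWeight z l m * branchingSchur y n l =
      (∏ j ∈ Finset.range n, (1 - z * y j)⁻¹) * branchingSchur y n m := by
  induction n generalizing m with
  | zero =>
    rw [tsum_eq_single 0 fun l hl => by simp [hl]]
    by_cases hm : m = 0 <;> simp [stripWeight, hm]
  | succ n ih =>
    calc ∑' l, stripWeight z l m * branchingSchur y (n + 1) l
        = ∑' k, (∑' l, stripWeight z l m * stripWeight (y n) l k) * branchingSchur y n k := by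
          simp_rw [← tsum_stripWeight_mul_branchingSchur, ← ENNReal.tsum_mul_left,
            ← ENNReal.tsum_mul_right, ← mul_assoc]
          exact ENNReal.tsum_comm
      _ = (1 - z * y n)⁻¹ * ∑' j, stripWeight (y n) m j *
            ∑' k, stripWeight z k j * branchingSchur y n k := by
          simp_rw [tsum_stripWeight_mul_stripWeight_comm, mul_assoc, ENNReal.tsum_mul_left,
            ← ENNReal.tsum_mul_left, ← ENNReal.tsum_mul_right, mul_assoc]
          rw [ENNReal.tsum_comm]
          simp_rw [ENNReal.tsum_mul_left]
      _ = _ := by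
          simp_rw [ih, mul_left_comm (stripWeight _ _ _), ENNReal.tsum_mul_left,
            tsum_stripWeight_mul_branchingSchur, Finset.prod_range_succ]
          ring

theorem tsum_branchingSchur_mul_branchingSchur (x y : ℕ → ℝ≥0∞) (n m : ℕ) :
    ∑' l, branchingSchur x n l * branchingSchur y m l =
      ∏ i ∈ Finset.range n, ∏ j ∈ Finset.range m, (1 - x i * y j)⁻¹ := by
  induction n with
  | zero => rw [tsum_eq_single 0 fun l hl => by simp [hl]]; simp
  | succ n ih =>
    calc ∑' l, branchingSchur x (n + 1) l * branchingSchur y m l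
        = ∑' k, branchingSchur x n k * ∑' l, stripWeight (x n) l k * branchingSchur y m l := by
          simp_rw [← tsum_stripWeight_mul_branchingSchur x, ← ENNReal.tsum_mul_left,
            ← ENNReal.tsum_mul_right]
          rw [ENNReal.tsum_comm]
          exact tsum_congr fun k => tsum_congr fun l => by ring
      _ = _ := by
          simp_rw [tsum_stripWeight_mul_branchingSchur_left,
            mul_left_comm (branchingSchur x n _), ENNReal.tsum_mul_left, ih,
            Finset.prod_range_succ, mul_comm]

end Cauchy

/-- Semistandard tableaux of shape `l` with entries `0, …, n - 1`. Unlike for `SSYT`, the number of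
rows and the bound on the entries are independent, which permits induction on `n`; entries outside
the shape are `0`. -/
@[ext]
structure BoundedTableau (n : ℕ) (l : ℕ →₀ ℕ) where
  entry : ℕ → ℕ → ℕ
  row_weak : ∀ {i j₁ j₂}, j₁ ≤ j₂ → j₂ < l i → entry i j₁ ≤ entry i j₂
  col_strict : ∀ {i₁ i₂ j}, i₁ < i₂ → j < l i₂ → entry i₁ j < entry i₂ j
  entry_eq_zero : ∀ {i j}, l i ≤ j → entry i j = 0
  entry_lt : ∀ {i j}, j < l i → entry i j < n

namespace BoundedTableau

variable {R : Type*} [CommSemiring R] {n : ℕ} {l m : ℕ →₀ ℕ}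

/-- The monomial `∏ x (T i j)` over the cells `(i, j)` of the tableau `T`. -/
noncomputable def weight (T : BoundedTableau n l) (x : ℕ → R) : R :=
  l.prod fun i k => ∏ j ∈ Finset.range k, x (T.entry i j)

instance : Finite (BoundedTableau n l) := by
  refine Finite.of_injective (β := (Σ i : l.support, Fin (l i)) → Fin n)
    (fun T c => ⟨T.entry c.1 c.2, T.entry_lt c.2.2⟩) fun T T' h => ?_
  ext i j
  obtain hj | hj := lt_or_ge j (l i)
  · have hi : i ∈ l.support := Finsupp.mem_support_iff.2 (by omega)
    exact congrArg Fin.val (congrFun h ⟨⟨i, hi⟩, ⟨j, hj⟩⟩)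
  · rw [T.entry_eq_zero hj, T'.entry_eq_zero hj]

noncomputable instance : Fintype (BoundedTableau n l) := Fintype.ofFinite _

theorem exists_le_or_le_entry (T : BoundedTableau (n + 1) l) (i : ℕ) :
    ∃ j, l i ≤ j ∨ n ≤ T.entry i j :=
  ⟨l i, .inl le_rfl⟩

/-- The shape formed by the cells whose entry is less than the largest admissible entry `n`. -/
noncomputable def innerShape (T : BoundedTableau (n + 1) l) : ℕ →₀ ℕ :=
  Finsupp.onFinset l.support (fun i => Nat.find (T.exists_le_or_le_entry i)) fun _ hi =>
    Finsupp.mem_support_iff.2 fun h₀ => hi ((Nat.find_eq_zero _).2 (.inl h₀.le))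

theorem lt_innerShape_iff (T : BoundedTableau (n + 1) l) {i j : ℕ} :
    j < T.innerShape i ↔ j < l i ∧ T.entry i j < n := by
  rw [innerShape, Finsupp.onFinset_apply, Nat.lt_find_iff]
  simp only [not_or, not_le]
  exact ⟨fun h => h j le_rfl, fun h k hk => ⟨hk.trans_lt h.1, (T.row_weak hk h.1).trans_lt h.2⟩⟩

theorem innerShape_le (T : BoundedTableau (n + 1) l) : T.innerShape ≤ l := fun _ =>
  le_of_forall_lt fun _ hj => (T.lt_innerShape_iff.1 hj).1

theorem dropRow_le_innerShape (hl : Antitone l) (T : BoundedTableau (n + 1) l) :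
    dropRow l ≤ T.innerShape := fun i => by
  refine le_of_forall_lt fun j hj => T.lt_innerShape_iff.2 ?_
  rw [dropRow_apply] at hj
  have := T.col_strict i.lt_add_one hj
  have := T.entry_lt hj
  exact ⟨hj.trans_le (hl (Nat.le_add_right i 1)), by omega⟩

/-- The tableau of the entries less than `n`. -/
noncomputable def truncate (hl : Antitone l) (T : BoundedTableau (n + 1) l) :
    BoundedTableau n T.innerShape where
  entry i j := if j < T.innerShape i then T.entry i j else 0
  row_weak h hj := by
    rw [if_pos hj, if_pos (h.trans_lt hj)]
    exact T.row_weak h (T.lt_innerShape_iff.1 hj).1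
  col_strict h hj := by
    have hanti := antitone_right_of_dropRow_le (T.dropRow_le_innerShape hl) T.innerShape_le
    rw [if_pos hj, if_pos (hj.trans_le (hanti h.le))]
    exact T.col_strict h (T.lt_innerShape_iff.1 hj).1
  entry_eq_zero h := if_neg h.not_gt
  entry_lt h := by
    rw [if_pos h]
    exact (T.lt_innerShape_iff.1 h).2

/-- Filling the horizontal strip `l / m` with the entry `n`. -/
noncomputable def extend (hl : Antitone l) (h₁ : dropRow l ≤ m) (h₂ : m ≤ l)
    (T : BoundedTableau n m) : BoundedTableau (n + 1) l where
  entry i j := if j < m i then T.entry i j else if j < l i then n else 0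
  row_weak {i j₁ j₂} h hj := by
    by_cases hm : j₂ < m i
    · simpa [hm, h.trans_lt hm] using T.row_weak h hm
    · rw [if_neg hm, if_pos hj, if_pos (h.trans_lt hj)]
      split_ifs with hm'
      exacts [(T.entry_lt hm').le, le_rfl]
  col_strict {i₁ i₂ j} h hj := by
    have hm : j < m i₁ := hj.trans_le ((hl h).trans (by simpa using h₁ i₁))
    rw [if_pos hm]
    split_ifs with hm'
    exacts [T.col_strict h hm', T.entry_lt hm]
  entry_eq_zero {i j} h := by rw [if_neg ((h₂ i).trans h).not_gt, if_neg h.not_gt]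
  entry_lt {i j} h := by
    rw [if_pos h]
    split_ifs with hm
    exacts [(T.entry_lt hm).trans n.lt_succ_self, n.lt_succ_self]

theorem innerShape_extend (hl : Antitone l) (h₁ : dropRow l ≤ m) (h₂ : m ≤ l)
    (T : BoundedTableau n m) : (T.extend hl h₁ h₂).innerShape = m := by
  refine DFunLike.ext _ _ fun i => eq_of_forall_lt_iff fun j => ?_
  simp only [lt_innerShape_iff, extend]
  have := h₂ i
  split_ifs with hm hj
  · simp [hm, hm.trans_le this, T.entry_lt hm]
  · simp [hm]
  · simp [hm, hj]

theorem sigma_ext {s : Finset (ℕ →₀ ℕ)} {a b : Σ m : s, BoundedTableau n m} (h₁ : a.1.1 = b.1.1)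
    (h₂ : a.2.entry = b.2.entry) : a = b := by
  obtain ⟨⟨m, hm⟩, T⟩ := a
  obtain ⟨⟨m', hm'⟩, T'⟩ := b
  obtain rfl : m = m' := h₁
  obtain rfl : T = T' := BoundedTableau.ext h₂
  rfl

/-- The branching rule on tableaux: remove the horizontal strip of cells with entry `n`. -/
noncomputable def truncateEquiv (n : ℕ) (hl : Antitone l) :
    BoundedTableau (n + 1) l ≃ Σ m : Finset.Icc (dropRow l) l, BoundedTableau n m where
  toFun T := ⟨⟨T.innerShape, Finset.mem_Icc.2 ⟨T.dropRow_le_innerShape hl, T.innerShape_le⟩⟩,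
    T.truncate hl⟩
  invFun p := p.2.extend hl (Finset.mem_Icc.1 p.1.2).1 (Finset.mem_Icc.1 p.1.2).2
  left_inv T := by
    ext i j
    simp only [extend, truncate]
    split_ifs with hi hj
    · rfl
    · have := T.entry_lt hj
      have := mt (fun h => T.lt_innerShape_iff.2 ⟨hj, h⟩) hi
      omega
    · exact (T.entry_eq_zero (not_lt.1 hj)).symm
  right_inv p := by
    refine sigma_ext (innerShape_extend ..) ?_
    ext i j
    simp only [truncate, innerShape_extend]
    split_ifs with h
    · exact if_pos h
    · exact (p.2.entry_eq_zero (not_lt.1 h)).symm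

theorem weight_extend (hl : Antitone l) (h₁ : dropRow l ≤ m) (h₂ : m ≤ l)
    (T : BoundedTableau n m) (x : ℕ → R) :
    (T.extend hl h₁ h₂).weight x = x n ^ (l.degree - m.degree) * T.weight x := by
  have hrow (i : ℕ) : ∏ j ∈ Finset.range (l i), x ((T.extend hl h₁ h₂).entry i j) =
      x n ^ (l - m) i * ∏ j ∈ Finset.range (m i), x (T.entry i j) := by
    rw [← Finset.prod_range_mul_prod_Ico _ (h₂ i), mul_comm]
    congr 1
    · rw [Finset.prod_eq_pow_card (b := x n), Nat.card_Ico, Finsupp.tsub_apply]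
      intro j hj
      rw [Finset.mem_Ico] at hj
      simp [extend, hj.1.not_gt, hj.2]
    · exact Finset.prod_congr rfl fun j hj => by simp [extend, Finset.mem_range.1 hj]
  rw [weight, weight, Finsupp.prod, Finset.prod_congr rfl fun i _ => hrow i,
    Finset.prod_mul_distrib, Finset.prod_pow_eq_pow_sum, ← degree_tsub_of_le h₂,
    Finsupp.prod_of_support_subset m (Finsupp.support_mono h₂) _
      fun i _ => Finset.prod_range_zero _,
    Finsupp.degree_apply, Finset.sum_subset (Finsupp.support_mono tsub_le_self)
      fun i _ hi => Finsupp.notMem_support_iff.1 hi]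

theorem sum_weight (x : ℕ → R) (n : ℕ) (hl : Antitone l) :
    ∑ T : BoundedTableau n l, T.weight x = branchingSchur x n l := by
  induction n generalizing l with
  | zero =>
    by_cases h : l = 0
    · subst h
      have : Unique (BoundedTableau 0 0) :=
        { default := ⟨fun _ _ => 0, by simp, by simp, by simp, by simp⟩
          uniq := fun T => by ext i j; exact T.entry_eq_zero (Nat.zero_le _) }
      simp [weight]
    · obtain ⟨i, hi⟩ := DFunLike.ne_iff.1 h
      have : IsEmpty (BoundedTableau 0 l) :=
        ⟨fun T => (T.entry_lt (Nat.pos_of_ne_zero hi)).not_ge (Nat.zero_le _)⟩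
      simp [h]
  | succ n ih =>
    rw [← Equiv.sum_comp (truncateEquiv n hl).symm, Fintype.sum_sigma, branchingSchur_succ,
      ← Finset.sum_coe_sort (Finset.Icc _ _)]
    refine Fintype.sum_congr _ _ fun m => ?_
    have hm := Finset.mem_Icc.1 m.2
    rw [← ih (antitone_right_of_dropRow_le hm.1 hm.2), Finset.mul_sum]
    exact Fintype.sum_congr _ _ fun T => weight_extend hl hm.1 hm.2 T x

end BoundedTableau

section FinShape

variable {N : ℕ} {lam : Fin N → ℕ}

/-- A tuple of `N` row lengths as a shape with empty rows from the `N`-th row on. -/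
noncomputable def toShape (lam : Fin N → ℕ) : ℕ →₀ ℕ :=
  (Finsupp.equivFunOnFinite.symm lam).embDomain Fin.valEmbedding

@[simp]
theorem toShape_apply (lam : Fin N → ℕ) (i : Fin N) : toShape lam i = lam i :=
  Finsupp.embDomain_apply_self Fin.valEmbedding _ i

theorem toShape_of_le (lam : Fin N → ℕ) {i : ℕ} (hi : N ≤ i) : toShape lam i = 0 :=
  Finsupp.embDomain_of_notMem_range _ _ _ fun ⟨j, hj⟩ => hi.not_gt (hj ▸ j.2)

theorem lt_of_lt_toShape {i j : ℕ} (h : j < toShape lam i) : i < N :=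
  not_le.1 fun hi => by simp [toShape_of_le lam hi] at h

theorem antitone_toShape (h : Antitone lam) : Antitone (toShape lam) := fun i j hij => by
  obtain hj | hj := lt_or_ge j N
  · exact (toShape_apply lam ⟨j, hj⟩).trans_le <|
      (h (Fin.mk_le_mk.2 hij)).trans_eq (toShape_apply lam ⟨i, hij.trans_lt hj⟩).symm
  · simp [toShape_of_le lam hj]

theorem toShape_injective : Function.Injective (toShape (N := N)) :=
  (Finsupp.embDomain_injective _).comp Finsupp.equivFunOnFinite.symm.injective

theorem toShape_restrict {l : ℕ →₀ ℕ} (hl : ∀ i, N ≤ i → l i = 0) :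
    toShape (fun i : Fin N => l i) = l := by
  ext i
  obtain hi | hi := lt_or_ge i N
  · exact toShape_apply _ ⟨i, hi⟩
  · rw [toShape_of_le _ hi, hl i hi]

namespace SSYT

/-- Semistandard tableaux with `N` rows and entries in `Fin N`, as bounded tableaux. -/
noncomputable def equivBoundedTableau : SSYT N lam ≃ BoundedTableau N (toShape lam) where
  toFun T :=
    { entry := fun i j => if h : i < N then T.entry ⟨i, h⟩ j else 0
      row_weak := fun {i j₁ j₂} hj h => by
        lift i to Fin N using lt_of_lt_toShape h
        rw [toShape_apply] at h
        simpa using T.rowWeak i j₁ j₂ hj h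
      col_strict := fun {i₁ i₂ j} hi h => by
        lift i₂ to Fin N using lt_of_lt_toShape h
        lift i₁ to Fin N using hi.trans i₂.2
        rw [toShape_apply] at h
        simpa using T.colStrict i₁ i₂ hi j h
      entry_eq_zero := fun {i j} h => by
        split_ifs with hi
        · exact T.zeroOutside ⟨i, hi⟩ j ((toShape_apply lam ⟨i, hi⟩).symm.trans_le h)
        · rfl
      entry_lt := fun h => by simp [lt_of_lt_toShape h] }
  invFun T :=
    { entry := fun i j => ⟨T.entry i j, by
        obtain h | h := lt_or_ge j (toShape lam i)
        exacts [T.entry_lt h, (T.entry_eq_zero h).trans_lt i.pos]⟩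
      rowWeak := fun i _ _ hj h => T.row_weak hj (by rwa [toShape_apply lam i])
      colStrict := fun _ i₂ hi _ h => T.col_strict hi (by rwa [toShape_apply lam i₂])
      zeroOutside := fun i _ h => T.entry_eq_zero (by rwa [toShape_apply lam i]) }
  left_inv T := by simp
  right_inv T := by
    ext i j
    obtain hi | hi := lt_or_ge i N
    · simp [hi]
    · have hj : toShape lam i ≤ j := (toShape_of_le lam hi).trans_le (Nat.zero_le j)
      simp [hi.not_gt, T.entry_eq_zero hj]

instance : Finite (SSYT N lam) := .of_equiv _ equivBoundedTableau.symm

noncomputable instance : Fintype (SSYT N lam) := Fintype.ofFinite _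

theorem prod_pow_content {R : Type*} [CommSemiring R] (T : SSYT N lam) (x : ℕ → R) :
    ∏ k : Fin N, x k ^ T.content k = (equivBoundedTableau T).weight x := by
  have hsupp : (toShape lam).support ⊆ Finset.range N := fun i hi =>
    Finset.mem_range.2 (lt_of_lt_toShape (Nat.pos_of_ne_zero (Finsupp.mem_support_iff.1 hi)))
  rw [BoundedTableau.weight, Finsupp.prod_of_support_subset _ hsupp _
    fun _ _ => Finset.prod_range_zero _, Finset.prod_range]
  simp_rw [SSYT.content, ← Finset.prod_pow_eq_pow_sum]
  rw [Finset.prod_comm]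
  refine Fintype.prod_congr _ _ fun i => ?_
  rw [toShape_apply, ← Finset.prod_fiberwise (Finset.range (lam i)) (T.entry i)]
  refine Fintype.prod_congr _ _ fun k => (Finset.prod_eq_pow_card fun j hj => ?_).symm
  simp [equivBoundedTableau, (Finset.mem_filter.1 hj).2]

end SSYT

variable {R : Type*} [CommRing R] [TopologicalSpace R]

theorem schur_eq_branchingSchur (h : Antitone lam) (x : Fin N → R) :
    schur N lam x = branchingSchur (Function.extend Fin.val x 0) N (toShape lam) := by
  rw [schur, tsum_fintype, ← BoundedTableau.sum_weight _ _ (antitone_toShape h),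
    ← Equiv.sum_comp SSYT.equivBoundedTableau]
  refine Fintype.sum_congr _ _ fun T => ?_
  simp_rw [← SSYT.prod_pow_content, Fin.val_injective.extend_apply]

theorem map_schur {S : Type*} [CommRing S] [TopologicalSpace S] (f : R →+* S)
    (lam : Fin N → ℕ) (x : Fin N → R) : f (schur N lam x) = schur N lam (f ∘ x) := by
  simp [schur, tsum_fintype]

theorem schur_nonneg {x : Fin N → ℝ} (hx : 0 ≤ x) : 0 ≤ schur N lam x :=
  tsum_nonneg fun _ => Finset.prod_nonneg fun i _ => pow_nonneg (hx i) _

theorem schur_le_schur {x y : Fin N → ℝ} (hx : 0 ≤ x) (hxy : x ≤ y) :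
    schur N lam x ≤ schur N lam y := by
  simp_rw [schur, tsum_fintype]
  exact Finset.sum_le_sum fun T _ => Finset.prod_le_prod (fun i _ => pow_nonneg (hx i) _)
    fun i _ => pow_le_pow_left₀ (hx i) (hxy i) _

end FinShape

section CauchyIdentity

theorem hasSum_branchingSchur_mul_branchingSchur_nnreal {x y : ℕ → ℝ≥0} {n m : ℕ}
    (hxy : ∀ i < n, ∀ j < m, x i * y j < 1) :
    HasSum (fun l => branchingSchur x n l * branchingSchur y m l)
      (∏ i ∈ Finset.range n, ∏ j ∈ Finset.range m, (1 - x i * y j)⁻¹) := by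
  have hcauchy := tsum_branchingSchur_mul_branchingSchur (fun i => (x i : ℝ≥0∞)) (y ·) n m
  have hcoe (z : ℕ → ℝ≥0) (k : ℕ) (l : ℕ →₀ ℕ) :
      branchingSchur (fun i => (z i : ℝ≥0∞)) k l = branchingSchur z k l :=
    (map_branchingSchur ENNReal.ofNNRealHom z k l).symm
  have hprod : ∏ i ∈ Finset.range n, ∏ j ∈ Finset.range m, (1 - (x i : ℝ≥0∞) * y j)⁻¹ =
      (∏ i ∈ Finset.range n, ∏ j ∈ Finset.range m, (1 - x i * y j)⁻¹ : ℝ≥0) := by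
    push_cast
    refine Finset.prod_congr rfl fun i hi => Finset.prod_congr rfl fun j hj => ?_
    rw [ENNReal.coe_inv
      (tsub_pos_of_lt (hxy i (Finset.mem_range.1 hi) j (Finset.mem_range.1 hj))).ne']
    push_cast
    rfl
  simp_rw [hcoe, hprod] at hcauchy
  rw [← ENNReal.hasSum_coe, ← hcauchy]
  push_cast
  exact ENNReal.summable.hasSum

theorem hasSum_branchingSchur_mul_branchingSchur {x y : ℕ → ℝ} (hx : 0 ≤ x) (hy : 0 ≤ y)
    {n m : ℕ} (hxy : ∀ i < n, ∀ j < m, x i * y j < 1) :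
    HasSum (fun l => branchingSchur x n l * branchingSchur y m l)
      (∏ i ∈ Finset.range n, ∏ j ∈ Finset.range m, (1 - x i * y j)⁻¹) := by
  lift x to ℕ → ℝ≥0 using hx
  lift y to ℕ → ℝ≥0 using hy
  have hlt : ∀ i < n, ∀ j < m, x i * y j < 1 := fun i hi j hj => mod_cast hxy i hi j hj
  have hsum := NNReal.hasSum_coe.2 (hasSum_branchingSchur_mul_branchingSchur_nnreal hlt)
  have hcoe (z : ℕ → ℝ≥0) (k : ℕ) (l : ℕ →₀ ℕ) :
      ((branchingSchur z k l : ℝ≥0) : ℝ) = branchingSchur (fun i => (z i : ℝ)) k l :=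
    map_branchingSchur NNReal.toRealHom z k l
  push_cast [hcoe] at hsum
  convert hsum using 1
  refine Finset.prod_congr rfl fun i hi => Finset.prod_congr rfl fun j hj => ?_
  rw [NNReal.coe_sub (hlt i (Finset.mem_range.1 hi) j (Finset.mem_range.1 hj)).le]
  push_cast
  rfl

theorem hasSum_schur_mul_schur {N : ℕ} {x y : Fin N → ℝ} (hx : 0 ≤ x) (hy : 0 ≤ y)
    (hxy : ∀ i j, x i * y j < 1) :
    HasSum (fun lam : {l : Fin N → ℕ // Antitone l} => schur N lam.1 x * schur N lam.1 y)
      (∏ i, ∏ j, (1 - x i * y j)⁻¹) := by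
  have hinj : Function.Injective fun lam : {l : Fin N → ℕ // Antitone l} => toShape lam.1 :=
    toShape_injective.comp Subtype.val_injective
  have hext (z : Fin N → ℝ) (i : Fin N) : Function.extend Fin.val z 0 i = z i :=
    Fin.val_injective.extend_apply z 0 i
  have hcauchy := hasSum_branchingSchur_mul_branchingSchur (n := N) (m := N)
    (Function.extend_nonneg (f := Fin.val) hx le_rfl)
    (Function.extend_nonneg (f := Fin.val) hy le_rfl) fun i hi j hj => by
      lift i to Fin N using hi
      lift j to Fin N using hj
      simpa only [hext] using hxy i j
  simp_rw [Finset.prod_range, hext] at hcauchy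
  rw [← hinj.hasSum_iff fun l hl => ?_] at hcauchy
  · simpa only [Function.comp_def, ← schur_eq_branchingSchur (Subtype.prop _)] using hcauchy
  · by_contra hne
    have hne := left_ne_zero_of_mul hne
    exact hl ⟨⟨fun i => l i, fun i j h => antitone_of_branchingSchur_ne_zero hne h⟩,
      toShape_restrict fun i hi => apply_eq_zero_of_branchingSchur_ne_zero hne hi⟩

end CauchyIdentity

section CharpolyRoot

variable {N : ℕ}

/-- The eigenvalues of a complex matrix, with algebraic multiplicity, in the order in which
`schurMat` lists them. -/
noncomputable def charpolyRoot (C : Matrix (Fin N) (Fin N) ℂ) (i : Fin N) : ℂ :=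
  C.charpoly.roots.toList.getD i 0

theorem schurMat_eq_schur (lam : Fin N → ℕ) (C : Matrix (Fin N) (Fin N) ℂ) :
    schurMat N lam C = schur N lam (charpolyRoot C) := rfl

theorem card_roots_charpoly (C : Matrix (Fin N) (Fin N) ℂ) : C.charpoly.roots.card = N := by
  rw [Polynomial.splits_iff_card_roots.1 (IsAlgClosed.splits C.charpoly),
    Matrix.charpoly_natDegree_eq_dim, Fintype.card_fin]

theorem map_charpolyRoot (C : Matrix (Fin N) (Fin N) ℂ) :
    Finset.univ.val.map (charpolyRoot C) = C.charpoly.roots := by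
  conv_rhs => rw [← Multiset.coe_toList C.charpoly.roots]
  rw [Fin.univ_val_map, Multiset.coe_eq_coe]
  refine .of_eq (List.ext_getElem (by simp [card_roots_charpoly]) fun i _ hi => ?_)
  rw [List.getElem_ofFn, charpolyRoot, List.getD_eq_getElem _ _ hi]

theorem charpolyRoot_mem_spectrum (C : Matrix (Fin N) (Fin N) ℂ) (i : Fin N) :
    charpolyRoot C i ∈ spectrum ℂ C := by
  rw [Matrix.mem_spectrum_iff_isRoot_charpoly, ← Polynomial.mem_roots C.charpoly_monic.ne_zero,
    ← map_charpolyRoot]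
  exact Multiset.mem_map_of_mem _ (Finset.mem_univ i)

theorem esymm_roots_charpoly (C : Matrix (Fin N) (Fin N) ℂ) {k : ℕ} (hk : k ≤ N) :
    C.charpoly.roots.esymm k = (-1) ^ k * C.charpoly.coeff (N - k) := by
  have hdeg : C.charpoly.natDegree = N := by
    rw [Matrix.charpoly_natDegree_eq_dim, Fintype.card_fin]
  rw [Polynomial.coeff_eq_esymm_roots_of_card (by rw [card_roots_charpoly, hdeg])
    (by rw [hdeg]; exact N.sub_le k), hdeg, C.charpoly_monic.leadingCoeff, one_mul,
    Nat.sub_sub_self hk, ← mul_assoc, ← mul_pow, neg_one_mul, neg_neg, one_pow, one_mul]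

theorem continuous_charpoly_coeff {n R : Type*} [Fintype n] [DecidableEq n] [CommRing R]
    [TopologicalSpace R] [IsTopologicalRing R] (k : ℕ) :
    Continuous fun C : Matrix n n R => C.charpoly.coeff k := by
  have heval (C : Matrix n n R) : C.charpoly.coeff k =
      MvPolynomial.eval (fun p : n × n => C p.1 p.2) ((Matrix.charpoly.univ R n).coeff k) :=
    (Matrix.charpoly.univ_coeff_eval₂Hom n (RingHom.id R) (fun p => C p.1 p.2) k).symm
  simp_rw [heval]
  exact (MvPolynomial.continuous_eval _).comp
    (continuous_pi fun p => continuous_id.matrix_elem p.1 p.2)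

-- The roots themselves cannot be listed continuously, but a symmetric polynomial in them is a
-- polynomial in the coefficients of the characteristic polynomial.
theorem continuous_eval_charpolyRoot {P : MvPolynomial (Fin N) ℂ} (hP : P.IsSymmetric) :
    Continuous fun C : Matrix (Fin N) (Fin N) ℂ => MvPolynomial.eval (charpolyRoot C) P := by
  obtain ⟨Q, hQ⟩ := MvPolynomial.esymmAlgHom_fin_surjective ℂ le_rfl
    ⟨P, (MvPolynomial.mem_symmetricSubalgebra _).2 hP⟩
  have hQP : MvPolynomial.aeval (fun i : Fin N => MvPolynomial.esymm (Fin N) ℂ (i + 1)) Q = P := by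
    rw [← MvPolynomial.esymmAlgHom_apply, hQ]
  have heval (C : Matrix (Fin N) (Fin N) ℂ) : MvPolynomial.eval (charpolyRoot C) P =
      MvPolynomial.eval (fun i : Fin N => C.charpoly.roots.esymm (i + 1)) Q := by
    rw [← hQP, ← MvPolynomial.coe_aeval_eq_eval, ← MvPolynomial.coe_aeval_eq_eval]
    simp_rw [RingHom.coe_coe, ← map_charpolyRoot,
      ← MvPolynomial.aeval_esymm_eq_multiset_esymm (Fin N) ℂ]
    rw [← AlgHom.comp_apply, MvPolynomial.comp_aeval]
  simp_rw [heval]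
  refine (MvPolynomial.continuous_eval _).comp (continuous_pi fun i => ?_)
  simp_rw [esymm_roots_charpoly _ i.2]
  exact continuous_const.mul (continuous_charpoly_coeff _)

theorem exists_isSymmetric_eval_eq_schur {lam : Fin N → ℕ} (h : Antitone lam) :
    ∃ P : MvPolynomial (Fin N) ℂ, P.IsSymmetric ∧ ∀ z, MvPolynomial.eval z P = schur N lam z := by
  refine ⟨branchingSchur (Function.extend Fin.val MvPolynomial.X 0) N (toShape lam),
    fun σ => ?_, fun z => ?_⟩
  · rw [← RingHom.coe_coe (MvPolynomial.rename σ), map_branchingSchur_extend,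
      ← branchingSchur_extend_comp_perm MvPolynomial.X σ]
    congr 2
    exact funext fun i => MvPolynomial.rename_X σ i
  · rw [map_branchingSchur_extend, schur_eq_branchingSchur h]
    congr 2
    ext1 i
    simp

theorem continuous_schurMat {lam : Fin N → ℕ} (h : Antitone lam) :
    Continuous (schurMat N lam) := by
  obtain ⟨P, hP, hschur⟩ := exists_isSymmetric_eval_eq_schur h
  exact (continuous_eval_charpolyRoot hP).congr fun C => hschur _

end CharpolyRoot

section Determinant

open scoped Kronecker

variable {N : ℕ}

theorem det_one_sub_smul (b : ℂ) (C : Matrix (Fin N) (Fin N) ℂ) :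
    (1 - b • C).det = ∏ j, (1 - b * charpolyRoot C j) := by
  obtain rfl | hb := eq_or_ne b 0
  · simp
  · have hfactor : 1 - b • C = b • (Matrix.scalar (Fin N) b⁻¹ - C) := by
      rw [smul_sub, Matrix.scalar_apply, ← Matrix.smul_one_eq_diagonal, smul_inv_smul₀ hb]
    rw [hfactor, Matrix.det_smul, ← Matrix.eval_charpoly,
      (IsAlgClosed.splits C.charpoly).eq_prod_roots_of_monic C.charpoly_monic,
      ← map_charpolyRoot, Multiset.map_map, Polynomial.eval_multiset_prod, Multiset.map_map]
    change b ^ Fintype.card (Fin N) * ∏ j, _ = _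
    rw [← Finset.card_univ, ← Finset.prod_const, ← Finset.prod_mul_distrib]
    refine Finset.prod_congr rfl fun j _ => ?_
    simp [mul_sub, hb]

section Kronecker

variable {m n R : Type*} [Fintype m] [DecidableEq m] [Fintype n] [DecidableEq n] [CommRing R]

theorem det_one_sub_diagonal_kronecker (d : m → R) (C : Matrix n n R) :
    (1 - Matrix.diagonal d ⊗ₖ C).det = ∏ i, (1 - d i • C).det := by
  rw [Matrix.diagonal_kronecker, ← Matrix.det_blockDiagonal,
    ← Matrix.det_reindex_self (Equiv.prodComm n m)]
  congr 1
  rw [show (fun i => 1 - d i • C) = 1 - fun i => d i • C from rfl, Matrix.blockDiagonal_sub,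
    Matrix.blockDiagonal_one]
  ext i j
  simp [Matrix.one_apply]

theorem det_one_sub_mul_kronecker_comm (P Q : Matrix m m R) (C : Matrix n n R) :
    (1 - (P * Q) ⊗ₖ C).det = (1 - (Q * P) ⊗ₖ C).det := by
  rw [← Matrix.one_mul C, Matrix.mul_kronecker_mul, Matrix.det_one_sub_mul_comm,
    ← Matrix.mul_kronecker_mul, Matrix.one_mul, Matrix.mul_one]

end Kronecker

theorem det_one_sub_kronecker {B : Matrix (Fin N) (Fin N) ℂ} (hB : B.IsHermitian)
    (C : Matrix (Fin N) (Fin N) ℂ) :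
    (1 - B ⊗ₖ C).det = ∏ i, ∏ j, (1 - hB.eigenvalues i * charpolyRoot C j) := by
  conv_lhs => rw [hB.spectral_theorem, Unitary.conjStarAlgAut_apply]
  rw [det_one_sub_mul_kronecker_comm, ← Matrix.mul_assoc, Unitary.coe_star_mul_self,
    Matrix.one_mul, det_one_sub_diagonal_kronecker]
  exact Fintype.prod_congr _ _ fun i => det_one_sub_smul _ C

end Determinant

section FunctionalCalculus

open scoped Matrix.Norms.L2Operator MatrixOrder

theorem spectrum_mul_subset_Icc_of_nonneg {A : Type*} [CStarAlgebra A] [PartialOrder A]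
    [StarOrderedRing A] {a b : A} (ha : 0 ≤ a) (hb : 0 ≤ b) :
    spectrum ℂ (a * b) ⊆ Set.Icc 0 ((‖a‖ * ‖b‖ : ℝ) : ℂ) := by
  intro z hz
  have hz₀ : 0 ≤ z := by
    obtain rfl | hne := eq_or_ne z 0
    · rfl
    · have hsqrt : CFC.sqrt b * CFC.sqrt b = b := CFC.sqrt_mul_sqrt_self b
      have hmem : z ∈ spectrum ℂ (CFC.sqrt b * a * CFC.sqrt b) \ {0} := by
        rw [mul_assoc, spectrum.nonzero_mul_comm, mul_assoc, hsqrt]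
        exact ⟨hz, hne⟩
      exact spectrum_nonneg_of_nonneg
        ((CFC.sqrt_nonneg b).isSelfAdjoint.conjugate_nonneg ha) hmem.1
  obtain _ | _ := subsingleton_or_nontrivial A
  · simp [spectrum.of_subsingleton] at hz
  · refine ⟨hz₀, (Complex.norm_of_nonneg' hz₀).symm.trans_le (Complex.real_le_real.2 ?_)⟩
    exact (spectrum.norm_le_norm_of_mem hz).trans (norm_mul_le a b)

variable {N : ℕ}

theorem applyFun_eq_cfc (Φ : ℝ → ℝ) (M : selfAdjoint (Matrix (Fin N) (Fin N) ℂ)) :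
    applyFun Φ M = cfc Φ (M : Matrix (Fin N) (Fin N) ℂ) := by
  rw [(selfAdjoint_matrix_isHermitian M).cfc_eq]
  rfl

theorem continuous_applyFun {Φ : ℝ → ℝ} (hΦ : Continuous Φ) :
    Continuous (applyFun (N := N) Φ) := by
  simp_rw [funext (applyFun_eq_cfc Φ)]
  exact Continuous.cfc_of_mem_nhdsSet (s := Set.univ) Φ Filter.univ_mem continuous_subtype_val
    (fun M => M.2) hΦ.continuousOn

theorem spectrum_applyFun_mul_subset_Icc {Φ : ℝ → ℝ} {r : ℝ} (hΦ₀ : ∀ x, 0 ≤ Φ x)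
    (hΦr : ∀ x, Φ x ≤ r) {A : Matrix (Fin N) (Fin N) ℂ} (hA : A.PosSemidef)
    (hA₁ : ∀ i, hA.1.eigenvalues i ≤ 1) (M : selfAdjoint (Matrix (Fin N) (Fin N) ℂ)) :
    spectrum ℂ (applyFun Φ M * A) ⊆ Set.Icc 0 (r : ℂ) := by
  have hr : 0 ≤ r := (hΦ₀ 0).trans (hΦr 0)
  have hnorm_apply : ‖applyFun Φ M‖ ≤ r := by
    rw [applyFun_eq_cfc]
    exact norm_cfc_le hr fun x _ => by simpa [abs_of_nonneg (hΦ₀ x)] using hΦr x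
  have hnorm : ‖A‖ ≤ 1 := by
    rw [← cfc_id ℝ A hA.1]
    refine norm_cfc_le zero_le_one fun x hx => ?_
    rw [hA.1.spectrum_real_eq_range_eigenvalues] at hx
    obtain ⟨i, rfl⟩ := hx
    simpa [abs_of_nonneg (hA.eigenvalues_nonneg i)] using hA₁ i
  have happly : 0 ≤ applyFun Φ M := by
    rw [applyFun_eq_cfc]
    exact cfc_nonneg fun x _ => hΦ₀ x
  refine (spectrum_mul_subset_Icc_of_nonneg happly hA.nonneg).trans (Set.Icc_subset_Icc_right ?_)
  exact Complex.real_le_real.2 <|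
    (mul_le_of_le_one_right (norm_nonneg _) hnorm).trans hnorm_apply

end FunctionalCalculus

section Gaussian

theorem integrable_exp_neg_mul_norm_sq {E : Type*} [NormedAddCommGroup E] [NormedSpace ℝ E]
    [FiniteDimensional ℝ E] [MeasurableSpace E] [BorelSpace E] (μ : Measure E)
    [μ.IsAddHaarMeasure] {c : ℝ} (hc : 0 < c) :
    Integrable (fun x => Real.exp (-c * ‖x‖ ^ 2)) μ := by
  obtain _ | _ := subsingleton_or_nontrivial E
  · exact .of_finite
  · have hrpow := integrableOn_rpow_mul_exp_neg_mul_sq hc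
      (neg_one_lt_zero.trans_le (Nat.cast_nonneg (Module.finrank ℝ E - 1)))
    simp_rw [Real.rpow_natCast] at hrpow
    exact (integrable_fun_norm_addHaar μ).2 hrpow

instance borelSpace_matrix {m n α : Type*} [TopologicalSpace α] :
    BorelSpace (Matrix m n α) := ⟨rfl⟩

instance borelSpace_selfAdjoint_matrix {N : ℕ} :
    BorelSpace (selfAdjoint (Matrix (Fin N) (Fin N) ℂ)) := Subtype.borelSpace _

open scoped Matrix.Norms.Frobenius

theorem re_trace_mul_self {n : Type*} [Fintype n] (M : selfAdjoint (Matrix n n ℂ)) :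
    (Matrix.trace ((M : Matrix n n ℂ) * (M : Matrix n n ℂ))).re = ‖M‖ ^ 2 := by
  have hentry (i j : n) : ((M : Matrix n n ℂ) i j * (M : Matrix n n ℂ) j i).re =
      ‖(M : Matrix n n ℂ) i j‖ ^ 2 := by
    rw [← congr_fun₂ M.2 j i, Matrix.star_apply, RCLike.star_def, Complex.mul_conj,
      Complex.ofReal_re, Complex.normSq_eq_norm_sq]
  rw [← AddSubgroup.norm_coe, Matrix.frobenius_norm_def, ← Real.sqrt_eq_rpow,
    Real.sq_sqrt (by positivity)]
  simp [Matrix.trace, Matrix.mul_apply, hentry]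

theorem integrable_exp_mul_re_trace_mul_self {N : ℕ}
    (vol : Measure (selfAdjoint (Matrix (Fin N) (Fin N) ℂ))) [vol.IsAddHaarMeasure] {c : ℝ}
    (hc : c < 0) :
    Integrable (fun M : selfAdjoint (Matrix (Fin N) (Fin N) ℂ) =>
      Real.exp (c * (Matrix.trace
        ((M : Matrix (Fin N) (Fin N) ℂ) * (M : Matrix (Fin N) (Fin N) ℂ))).re)) vol := by
  have : FiniteDimensional ℝ (selfAdjoint (Matrix (Fin N) (Fin N) ℂ)) :=
    inferInstanceAs (FiniteDimensional ℝ (selfAdjoint.submodule ℝ (Matrix (Fin N) (Fin N) ℂ)))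
  -- The Frobenius topology agrees with the entrywise one definitionally, but instance search
  -- does not unfold it.
  simpa only [re_trace_mul_self, neg_neg] using
    @integrable_exp_neg_mul_norm_sq _ _ _ _ _ borelSpace_selfAdjoint_matrix vol ‹_› _
      (neg_pos.2 hc)

end Gaussian

section CauchyMatrix

open scoped Kronecker

variable {N : ℕ}

theorem continuous_det_one_sub_kronecker {m n R : Type*} [Fintype m] [DecidableEq m] [Fintype n]
    [DecidableEq n] [CommRing R] [TopologicalSpace R] [IsTopologicalRing R] (B : Matrix m m R) :
    Continuous fun C : Matrix n n R => (1 - B ⊗ₖ C).det :=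
  (continuous_const.sub <| continuous_matrix fun _ _ =>
    continuous_const.mul (continuous_id.matrix_elem _ _)).matrix_det

theorem schurMat_eq_ofReal_schur {C : Matrix (Fin N) (Fin N) ℂ} {y : Fin N → ℝ}
    (hy : charpolyRoot C = Complex.ofReal ∘ y) (lam : Fin N → ℕ) :
    schurMat N lam C = schur N lam y := by
  rw [schurMat_eq_schur, hy]
  exact (map_schur Complex.ofRealHom lam y).symm

theorem inv_re_det_one_sub_kronecker {B C : Matrix (Fin N) (Fin N) ℂ} (hB : B.IsHermitian)
    {y : Fin N → ℝ} (hy : charpolyRoot C = Complex.ofReal ∘ y) :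
    ((1 - B ⊗ₖ C).det.re)⁻¹ = ∏ i, ∏ j, (1 - hB.eigenvalues i * y j)⁻¹ := by
  simp only [det_one_sub_kronecker hB, hy, Function.comp_apply, Finset.prod_inv_distrib]
  norm_cast

variable {r : ℝ} {B C : Matrix (Fin N) (Fin N) ℂ}

theorem exists_charpolyRoot_eq_ofReal (hC : spectrum ℂ C ⊆ Set.Icc 0 (r : ℂ)) :
    ∃ y : Fin N → ℝ, 0 ≤ y ∧ (∀ i, y i ≤ r) ∧ charpolyRoot C = Complex.ofReal ∘ y := by
  have hmem (i : Fin N) := hC (charpolyRoot_mem_spectrum C i)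
  exact ⟨fun i => (charpolyRoot C i).re, fun i => (Complex.le_def.1 (hmem i).1).1,
    fun i => (Complex.le_def.1 (hmem i).2).1,
    funext fun i => Complex.eq_re_of_ofReal_le (hmem i).1⟩

theorem re_schurMat_mem_Icc (hC : spectrum ℂ C ⊆ Set.Icc 0 (r : ℂ)) (lam : Fin N → ℕ) :
    (schurMat N lam C).re ∈ Set.Icc 0 (schur N lam fun _ => r) := by
  obtain ⟨y, hy₀, hyr, hy⟩ := exists_charpolyRoot_eq_ofReal hC
  rw [schurMat_eq_ofReal_schur hy, Complex.ofReal_re]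
  exact ⟨schur_nonneg hy₀, schur_le_schur hy₀ hyr⟩

theorem inv_re_det_one_sub_kronecker_mem_Icc (hC : spectrum ℂ C ⊆ Set.Icc 0 (r : ℂ))
    (hB : B.PosSemidef) (hBr : ∀ i, hB.1.eigenvalues i * r < 1) :
    ((1 - B ⊗ₖ C).det.re)⁻¹ ∈
      Set.Icc 0 (∏ i, ∏ _j : Fin N, (1 - hB.1.eigenvalues i * r)⁻¹) := by
  obtain ⟨y, -, hyr, hy⟩ := exists_charpolyRoot_eq_ofReal hC
  rw [inv_re_det_one_sub_kronecker hB.1 hy]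
  have hle (i j) : 1 - hB.1.eigenvalues i * r ≤ 1 - hB.1.eigenvalues i * y j :=
    sub_le_sub_left (mul_le_mul_of_nonneg_left (hyr j) (hB.eigenvalues_nonneg i)) 1
  have hpos (i) : 0 < 1 - hB.1.eigenvalues i * r := sub_pos.2 (hBr i)
  have hnonneg (i j) : 0 ≤ (1 - hB.1.eigenvalues i * y j)⁻¹ :=
    inv_nonneg.2 ((hpos i).le.trans (hle i j))
  have hnonneg_prod (i) : 0 ≤ ∏ j, (1 - hB.1.eigenvalues i * y j)⁻¹ :=
    Finset.prod_nonneg fun j _ => hnonneg i j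
  exact ⟨Finset.prod_nonneg fun i _ => hnonneg_prod i,
    Finset.prod_le_prod (fun i _ => hnonneg_prod i) fun i _ =>
      Finset.prod_le_prod (fun j _ => hnonneg i j) fun j _ => inv_anti₀ (hpos i) (hle i j)⟩

theorem hasSum_schur_mul_re_schurMat (hC : spectrum ℂ C ⊆ Set.Icc 0 (r : ℂ))
    (hB : B.PosSemidef) (hBr : ∀ i, hB.1.eigenvalues i * r < 1) :
    HasSum (fun lam : {l : Fin N → ℕ // Antitone l} =>
      schur N lam.1 hB.1.eigenvalues * (schurMat N lam.1 C).re) ((1 - B ⊗ₖ C).det.re)⁻¹ := by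
  obtain ⟨y, hy₀, hyr, hy⟩ := exists_charpolyRoot_eq_ofReal hC
  simp_rw [inv_re_det_one_sub_kronecker hB.1 hy, schurMat_eq_ofReal_schur hy, Complex.ofReal_re]
  exact hasSum_schur_mul_schur hB.eigenvalues_nonneg hy₀ fun i j =>
    (mul_le_mul_of_nonneg_left (hyr j) (hB.eigenvalues_nonneg i)).trans_lt (hBr i)

end CauchyMatrix

section Integration

open scoped Kronecker

variable {Ω : Type*} [MeasurableSpace Ω] {μ : Measure Ω} {w : Ω → ℝ}

theorem integrable_mul_of_mem_Icc (hw : Integrable w μ) {g : Ω → ℝ} (hg : Measurable g) {K : ℝ}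
    (hgK : ∀ ω, g ω ∈ Set.Icc 0 K) : Integrable (fun ω => w ω * g ω) μ :=
  hw.mul_bdd (c := K) hg.aestronglyMeasurable <|
    .of_forall fun ω => (Real.norm_of_nonneg (hgK ω).1).trans_le (hgK ω).2

theorem hasSum_mul_integral_mul {ι : Type*} [Countable ι] {c : ι → ℝ} {g : ι → Ω → ℝ} {G : Ω → ℝ}
    (hc : ∀ i, 0 ≤ c i) (hg : ∀ i ω, 0 ≤ g i ω)
    (hwg : ∀ i, AEStronglyMeasurable (fun ω => w ω * g i ω) μ)
    (hG : ∀ ω, HasSum (fun i => c i * g i ω) (G ω)) (hwG : Integrable (fun ω => w ω * G ω) μ) :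
    HasSum (fun i => c i * ∫ ω, w ω * g i ω ∂μ) (∫ ω, w ω * G ω ∂μ) := by
  have hnorm (ω) : HasSum (fun i => ‖c i * (w ω * g i ω)‖) ‖w ω * G ω‖ := by
    have hG₀ : 0 ≤ G ω := (hG ω).nonneg fun i => mul_nonneg (hc i) (hg i ω)
    simpa only [norm_mul, Real.norm_of_nonneg, hc, hg, hG₀, mul_left_comm] using
      (hG ω).mul_left ‖w ω‖
  simp_rw [← integral_const_mul]
  refine hasSum_integral_of_dominated_convergence (fun i ω => ‖c i * (w ω * g i ω)‖)
    (fun i => (hwg i).const_mul _) (fun i => .of_forall fun ω => le_rfl)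
    (.of_forall fun ω => (hnorm ω).summable) ?_ (.of_forall fun ω => ?_)
  · simpa only [(hnorm _).tsum_eq] using hwG.norm
  · simpa only [mul_left_comm] using (hG ω).mul_left (w ω)

theorem character_expansion_general (hw : Integrable w μ) {N : ℕ} {r : ℝ}
    {C : Ω → Matrix (Fin N) (Fin N) ℂ} (hC : Measurable C)
    (hCr : ∀ ω, spectrum ℂ (C ω) ⊆ Set.Icc 0 (r : ℂ)) {B : Matrix (Fin N) (Fin N) ℂ}
    (hB : B.PosSemidef) (hBr : ∀ i, hB.1.eigenvalues i * r < 1) :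
    Integrable (fun ω => w ω * ((1 - B ⊗ₖ C ω).det.re)⁻¹) μ ∧
    (∀ lam : {l : Fin N → ℕ // Antitone l},
      Integrable (fun ω => w ω * (schurMat N lam.1 (C ω)).re) μ) ∧
    Summable (fun lam : {l : Fin N → ℕ // Antitone l} =>
      schur N lam.1 hB.1.eigenvalues * ∫ ω, w ω * (schurMat N lam.1 (C ω)).re ∂μ) ∧
    ∫ ω, w ω * ((1 - B ⊗ₖ C ω).det.re)⁻¹ ∂μ =
      ∑' lam : {l : Fin N → ℕ // Antitone l},
        schur N lam.1 hB.1.eigenvalues * ∫ ω, w ω * (schurMat N lam.1 (C ω)).re ∂μ := by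
  have hdet_meas : Measurable fun ω => ((1 - B ⊗ₖ C ω).det.re)⁻¹ := by
    have h : Measurable fun M : Matrix (Fin N) (Fin N) ℂ => (1 - B ⊗ₖ M).det :=
      (continuous_det_one_sub_kronecker B).measurable
    exact (Complex.measurable_re.comp (h.comp hC)).inv
  have hschur_meas (lam : {l : Fin N → ℕ // Antitone l}) :
      Measurable fun ω => (schurMat N lam.1 (C ω)).re :=
    Complex.measurable_re.comp ((continuous_schurMat lam.2).measurable.comp hC)
  have hdet : Integrable (fun ω => w ω * ((1 - B ⊗ₖ C ω).det.re)⁻¹) μ :=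
    integrable_mul_of_mem_Icc hw hdet_meas
      fun ω => inv_re_det_one_sub_kronecker_mem_Icc (hCr ω) hB hBr
  have hschur (lam : {l : Fin N → ℕ // Antitone l}) :
      Integrable (fun ω => w ω * (schurMat N lam.1 (C ω)).re) μ :=
    integrable_mul_of_mem_Icc hw (hschur_meas lam) fun ω => re_schurMat_mem_Icc (hCr ω) lam.1
  have hsum := hasSum_mul_integral_mul
    (fun lam : {l : Fin N → ℕ // Antitone l} => schur_nonneg (lam := lam.1) hB.eigenvalues_nonneg)
    (fun lam ω => (re_schurMat_mem_Icc (hCr ω) lam.1).1) (fun lam => (hschur lam).1)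
    (fun ω => hasSum_schur_mul_re_schurMat (hCr ω) hB hBr) hdet
  exact ⟨hdet, hschur, hsum.summable, hsum.tsum_eq.symm⟩

end Integration

/-- **Character expansion of the partition function.**
`∫_{μ̂^N_M ∈ X} e^{-(N/2) tr M²} det (I - B ⊗ Φ(M)A)⁻¹ dM
  = ∑_λ s_λ(B) ∫_{μ̂^N_M ∈ X} e^{-(N/2) tr M²} s_λ(Φ(M)A) dM`,
both sides being finite. -/
theorem character_expansion (N : ℕ) (hN : 0 < N)
    (vol : Measure (selfAdjoint (Matrix (Fin N) (Fin N) ℂ))) [vol.IsAddHaarMeasure]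
    (A B : Matrix (Fin N) (Fin N) ℂ) (hA : A.PosSemidef) (hB : B.PosSemidef)
    (hAnorm : ∀ i, hA.1.eigenvalues i ≤ 1) (hBnorm : ∀ i, hB.1.eigenvalues i ≤ 1)
    (Φ : ℝ → ℝ) (hΦcont : Continuous Φ) (hΦnonneg : ∀ x, 0 ≤ Φ x)
    (hΦlt : ∃ r : ℝ, r < 1 ∧ ∀ x, Φ x ≤ r)
    (X : Set (Measure ℝ)) (hX : MeasurableSet X) :
    IntegrableOn
      (fun M : selfAdjoint (Matrix (Fin N) (Fin N) ℂ) =>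
        Real.exp (-(N : ℝ) / 2 * (Matrix.trace
            ((M : Matrix (Fin N) (Fin N) ℂ) * (M : Matrix (Fin N) (Fin N) ℂ))).re) *
          ((Matrix.det ((1 : Matrix (Fin N × Fin N) (Fin N × Fin N) ℂ) -
              Matrix.kroneckerMap (· * ·) B (applyFun Φ M * A))).re)⁻¹)
      {M | specMeasure M ∈ X} vol ∧
    (∀ lam : {l : Fin N → ℕ // Antitone l},
      IntegrableOn
        (fun M : selfAdjoint (Matrix (Fin N) (Fin N) ℂ) =>
          Real.exp (-(N : ℝ) / 2 * (Matrix.trace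
              ((M : Matrix (Fin N) (Fin N) ℂ) * (M : Matrix (Fin N) (Fin N) ℂ))).re) *
            (schurMat N lam.1 (applyFun Φ M * A)).re)
        {M | specMeasure M ∈ X} vol) ∧
    Summable (fun lam : {l : Fin N → ℕ // Antitone l} =>
      schur N lam.1 (fun i => hB.1.eigenvalues i) *
        ∫ M in {M | specMeasure M ∈ X},
          Real.exp (-(N : ℝ) / 2 * (Matrix.trace
              ((M : Matrix (Fin N) (Fin N) ℂ) * (M : Matrix (Fin N) (Fin N) ℂ))).re) *
            (schurMat N lam.1 (applyFun Φ M * A)).re ∂vol) ∧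
    (∫ M in {M | specMeasure M ∈ X},
        Real.exp (-(N : ℝ) / 2 * (Matrix.trace
            ((M : Matrix (Fin N) (Fin N) ℂ) * (M : Matrix (Fin N) (Fin N) ℂ))).re) *
          ((Matrix.det ((1 : Matrix (Fin N × Fin N) (Fin N × Fin N) ℂ) -
              Matrix.kroneckerMap (· * ·) B (applyFun Φ M * A))).re)⁻¹ ∂vol)
      = ∑' lam : {l : Fin N → ℕ // Antitone l},
          schur N lam.1 (fun i => hB.1.eigenvalues i) *
            ∫ M in {M | specMeasure M ∈ X},
              Real.exp (-(N : ℝ) / 2 * (Matrix.trace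
                  ((M : Matrix (Fin N) (Fin N) ℂ) * (M : Matrix (Fin N) (Fin N) ℂ))).re) *
                (schurMat N lam.1 (applyFun Φ M * A)).re ∂vol := by
  obtain ⟨r, hr₁, hΦr⟩ := hΦlt
  have hr₀ : 0 ≤ r := (hΦnonneg 0).trans (hΦr 0)
  have hN' : -(N : ℝ) / 2 < 0 := by linarith [(Nat.cast_pos (α := ℝ)).2 hN]
  exact character_expansion_general (integrable_exp_mul_re_trace_mul_self vol hN').integrableOn
    ((continuous_applyFun hΦcont).matrix_mul continuous_const).measurable
    (spectrum_applyFun_mul_subset_Icc hΦnonneg hΦr hA hAnorm) hB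
    fun i => (mul_le_of_le_one_left hr₀ (hBnorm i)).trans_lt hr₁
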